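/- Let $\mu$ be a centred Gaussian Borel measure on a separable Banach space $\mathbb{B}$, and let $K, L \subseteq \mathbb{B}$ be closed, convex, symmetric sets. Then $\mu(K \cap L) \ge \mu(K)\,\mu(L)$. -/

import Mathlib

open MeasureTheory ProbabilityTheory

/-!
Hahn–Banach and the Lindelöf property turn each of `K` and `L` into a countable intersection of
slabs `{|f| ≤ 1}`, so continuity of the measure leaves finitely many slabs, i.e. the centred
Gaussian vector of the functionals involved.

Following Royen, scale the cross covariances of its two blocks by `t ∈ [0, 1]`, to get `C t`: at
`t = 1` this is the law of the vector, at `t = 0` the blocks are independent, and it suffices that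
the probability of all the slabs increases with `t`. The Laplace transform of the vector of squares,
at a diagonal matrix `Λ`, is `det (1 + Λ * C t) ^ (-1/2)`, and `det (1 + Λ * C t)` is the sum over
`J` of `∏ i ∈ J, Λ i` times the principal minor of `C t` on `J`. These minors decrease in `t`. The
exponent `-3/2` which differentiation produces is again a Laplace transform, that of the sum of the
squares of three independent copies, so that the `t`-derivative of the expectation of a function
`F` of the squares is nonnegative once all mixed first-order derivatives `∂_J F` have sign
`(-1) ^ |J|`. Products of nonnegative increasing polynomials in `exp (-x i ^ 2 * log 2)` have this
property and approximate the indicator of the slabs, `|x i| ≤ 1` being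
`1/2 ≤ exp (-x i ^ 2 * log 2)`.
-/

namespace GaussianCorrelation

open Matrix Filter Topology
open scoped MatrixOrder

variable {n m : Type*}

section Determinants

variable [Fintype n] [DecidableEq n]

lemma det_one_add_eq_prod_eigenvalues {𝕜 : Type*} [RCLike 𝕜] {S : Matrix n n 𝕜}
    (hS : S.IsHermitian) : (1 + S).det = ∏ i, (1 + (hS.eigenvalues i : 𝕜)) := by
  have hunitary : (hS.eigenvectorUnitary : Matrix n n 𝕜) *
      star (hS.eigenvectorUnitary : Matrix n n 𝕜) = 1 :=
    mem_unitaryGroup_iff.mp hS.eigenvectorUnitary.2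
  have hfactor : 1 + S = (hS.eigenvectorUnitary : Matrix n n 𝕜) *
      diagonal (fun i => 1 + (hS.eigenvalues i : 𝕜)) *
        star (hS.eigenvectorUnitary : Matrix n n 𝕜) := by
    have hdiag : diagonal (fun i => 1 + (hS.eigenvalues i : 𝕜)) =
        1 + diagonal (RCLike.ofReal ∘ hS.eigenvalues) := by
      rw [← diagonal_one, diagonal_add]; rfl
    rw [hdiag, mul_add, add_mul, mul_one, hunitary]
    congr 1
    exact hS.spectral_theorem
  rw [hfactor, det_mul_right_comm, hunitary, one_mul, det_diagonal]

lemma one_le_det_one_add {S : Matrix n n ℝ} (hS : S.PosSemidef) : 1 ≤ (1 + S).det := by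
  rw [det_one_add_eq_prod_eigenvalues hS.1]
  exact Finset.one_le_prod fun i _ => le_add_of_nonneg_right (hS.eigenvalues_nonneg i)

lemma det_le_det_add {P R : Matrix n n ℝ} (hP : P.PosSemidef) (hR : R.PosSemidef) :
    P.det ≤ (P + R).det := by
  by_cases hdet : P.det = 0
  · exact hdet ▸ (hP.add hR).det_nonneg
  set T := CFC.sqrt P
  have hTT : T * T = P := CFC.sqrt_mul_sqrt_self _ hP.nonneg
  have hTstar : Tᴴ = T := (CFC.sqrt_nonneg P).isSelfAdjoint
  have hTunit : IsUnit T.det := by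
    refine isUnit_iff_ne_zero.mpr fun h => hdet ?_
    rw [← hTT, det_mul, h, mul_zero]
  have hfactor : P + R = T * (1 + T⁻¹ * R * T⁻¹) * T := by
    rw [mul_add, add_mul, mul_one, hTT, mul_assoc T⁻¹, mul_nonsing_inv_cancel_left _ _ hTunit,
      nonsing_inv_mul_cancel_right _ _ hTunit]
  have hcongr : (T⁻¹ * R * T⁻¹).PosSemidef := by
    simpa only [conjTranspose_nonsing_inv, hTstar] using hR.conjTranspose_mul_mul_same T⁻¹
  calc P.det ≤ P.det * (1 + T⁻¹ * R * T⁻¹).det :=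
        le_mul_of_one_le_right hP.det_nonneg (one_le_det_one_add hcongr)
    _ = (P + R).det := by rw [hfactor, det_mul_right_comm, det_mul, hTT]

lemma one_le_det_one_add_mul {L C : Matrix n n ℝ} (hL : L.PosSemidef) (hC : C.PosSemidef) :
    1 ≤ (1 + L * C).det := by
  set T := CFC.sqrt C
  have hTT : T * T = C := CFC.sqrt_mul_sqrt_self _ hC.nonneg
  have hTstar : Tᴴ = T := (CFC.sqrt_nonneg C).isSelfAdjoint
  calc 1 ≤ (1 + Tᴴ * L * T).det := one_le_det_one_add (hL.conjTranspose_mul_mul_same T)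
    _ = (1 + L * (T * T)).det := by
      rw [hTstar, mul_assoc, det_one_add_mul_comm, mul_assoc]
    _ = (1 + L * C).det := by rw [hTT]

end Determinants

section Interpolation

/-- Royen's interpolation between covariance matrices: the cross covariances between the `n`-block
and the `m`-block are multiplied by `t`, so that the two blocks decouple at `t = 0`. -/
def crossScale (A : Matrix n n ℝ) (B : Matrix n m ℝ) (D : Matrix m m ℝ) (t : ℝ) :
    Matrix (n ⊕ m) (n ⊕ m) ℝ :=
  fromBlocks A (t • B) (t • B)ᴴ D

variable {A : Matrix n n ℝ} {B : Matrix n m ℝ} {D : Matrix m m ℝ}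

lemma posSemidef_crossScale [Finite n] [Finite m] (h : (crossScale A B D 1).PosSemidef) {t : ℝ}
    (ht : t ∈ Set.Icc (0 : ℝ) 1) : (crossScale A B D t).PosSemidef := by
  classical
  cases nonempty_fintype n
  cases nonempty_fintype m
  have hneg : (crossScale A B D (-1)).PosSemidef := by
    convert h.conjTranspose_mul_mul_same
      (fromBlocks 1 0 0 (-1) : Matrix (n ⊕ m) (n ⊕ m) ℝ) using 1
    rw [fromBlocks_conjTranspose]
    simp only [crossScale, fromBlocks_multiply]
    simp
  have hconvex : crossScale A B D t =
      ((1 + t) / 2) • crossScale A B D 1 + ((1 - t) / 2) • crossScale A B D (-1) := by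
    simp only [crossScale, fromBlocks_smul, fromBlocks_add, conjTranspose_smul, smul_smul,
      ← add_smul, star_trivial]
    congr 1 <;> module
  rw [hconvex]
  exact (h.smul (by linarith [ht.1])).add (hneg.smul (by linarith [ht.2]))

variable [Fintype n] [DecidableEq n] [Fintype m] [DecidableEq m]

lemma det_crossScale_of_invertible [Invertible A] (t : ℝ) :
    (crossScale A B D t).det = A.det * (D - t ^ 2 • (Bᴴ * A⁻¹ * B)).det := by
  simp [crossScale, det_fromBlocks₁₁, smul_smul, sq]

lemma antitoneOn_det_crossScale (h : (crossScale A B D 1).PosSemidef) :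
    AntitoneOn (fun t => (crossScale A B D t).det) (Set.Icc 0 1) := by
  intro s hs t ht hst
  have hA : A.PosSemidef := h.submatrix (Sum.inl : n → n ⊕ m)
  by_cases hdet : A.det = 0
  · refine Eq.trans_le ?_ (posSemidef_crossScale h hs).det_nonneg
    obtain ⟨v, hv, hAv⟩ := exists_mulVec_eq_zero_iff.mpr hdet
    refine exists_mulVec_eq_zero_iff.mp ⟨Sum.elim v 0, fun h0 => hv ?_, ?_⟩
    · exact funext fun i => congrFun h0 (Sum.inl i)
    · rw [← (posSemidef_crossScale h ht).dotProduct_mulVec_zero_iff]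
      simp [crossScale, fromBlocks_mulVec, hAv, dotProduct, Fintype.sum_sum_type]
  have hApos : A.PosDef := hA.posDef_iff_det_ne_zero.mpr hdet
  have : Invertible A := hApos.isUnit.invertible
  have hgram : (Bᴴ * A⁻¹ * B).PosSemidef := hApos.inv.posSemidef.conjTranspose_mul_mul_same B
  have hschur : (D - t ^ 2 • (Bᴴ * A⁻¹ * B)).PosSemidef := by
    simpa [sq, smul_smul] using
      (PosDef.fromBlocks₁₁ (t • B) D hApos).mp (posSemidef_crossScale h ht)
  have hsplit : D - s ^ 2 • (Bᴴ * A⁻¹ * B) =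
      D - t ^ 2 • (Bᴴ * A⁻¹ * B) + (t ^ 2 - s ^ 2) • (Bᴴ * A⁻¹ * B) := by module
  simp only [det_crossScale_of_invertible]
  rw [hsplit]
  refine mul_le_mul_of_nonneg_left (det_le_det_add hschur (hgram.smul ?_)) hA.det_nonneg
  exact sub_nonneg.mpr (pow_le_pow_left₀ hs.1 hst 2)

lemma differentiable_det_crossScale :
    Differentiable ℝ (fun t => (crossScale A B D t).det) := by
  simp only [det_apply, crossScale]
  refine Differentiable.fun_sum fun σ _ => Differentiable.const_smul
    (Differentiable.fun_finsetProd fun i _ => ?_) _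
  rcases hσ : σ i with a | a <;> rcases i with b | b <;> simp

end Interpolation

section PrincipalMinors

/-- The principal minor of `C` on the rows and columns in `J`; it is `1` for `J = ∅`. -/
def principalMinor {R : Type*} [CommRing R] [DecidableEq n] (C : Matrix n n R) (J : Finset n) : R :=
  (C.submatrix ((↑) : J → n) (↑)).det

section Expansion

variable {R : Type*} [CommRing R] [Fintype n] [DecidableEq n]

lemma det_piecewise_one (C : Matrix n n R) (J : Finset n) :
    (of (J.piecewise C (1 : Matrix n n R))).det = principalMinor C J := by
  rw [twoBlockTriangular_det _ (· ∈ J)]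
  · have hout : toSquareBlockProp (of (J.piecewise C (1 : Matrix n n R))) (fun i => ¬ i ∈ J) =
        1 := by
      ext i j
      simp [toSquareBlockProp, Finset.piecewise, i.2, one_apply, Subtype.ext_iff]
    have hin : toSquareBlockProp (of (J.piecewise C (1 : Matrix n n R))) (· ∈ J) =
        C.submatrix (↑) (↑) := by
      ext i j
      simp [toSquareBlockProp, Finset.piecewise]
    rw [hout, hin, det_one, mul_one, principalMinor]
    convert rfl
  · intro i hi j hj
    simp [hi, Finset.piecewise, one_apply_ne (ne_of_mem_of_not_mem hj hi).symm]

lemma det_one_add_diagonal_mul (C : Matrix n n R) (l : n → R) :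
    (1 + diagonal l * C).det = ∑ J : Finset n, (∏ i ∈ J, l i) * principalMinor C J := by
  let E : n → n → R := (1 : Matrix n n R)
  have hrows : 1 + diagonal l * C = of ((fun i => l i • C i) + E) := by
    ext i j
    rw [Matrix.add_apply, diagonal_mul]
    exact add_comm _ _
  have hscale (J : Finset n) : J.piecewise (fun i => l i • C i) E =
      J.piecewise (fun i => l i • J.piecewise C E i) (J.piecewise C E) := by
    ext i j
    by_cases hi : i ∈ J <;> simp [Finset.piecewise, hi]
  rw [hrows]
  refine (detRowAlternating.toMultilinearMap.map_add_univ _ _).trans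
    (Finset.sum_congr rfl fun J _ => ?_)
  rw [hscale, MultilinearMap.map_piecewise_smul, ← det_piecewise_one, smul_eq_mul]
  rfl

end Expansion

variable [DecidableEq n] [DecidableEq m] {A : Matrix n n ℝ} {B : Matrix n m ℝ} {D : Matrix m m ℝ}
  (J : Finset (n ⊕ m))

lemma principalMinor_crossScale [Fintype n] [Fintype m] (t : ℝ) :
    principalMinor (crossScale A B D t) J =
      (crossScale (A.submatrix (↑) (↑)) (B.submatrix (↑) (↑)) (D.submatrix (↑) (↑)) t :
        Matrix ({i // Sum.inl i ∈ J} ⊕ {j // Sum.inr j ∈ J}) _ ℝ).det := by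
  rw [principalMinor, ← det_submatrix_equiv_self (Equiv.subtypeSum (p := (· ∈ J))).symm]
  congr 1
  ext (i | i) (j | j) <;> rfl

lemma antitoneOn_principalMinor_crossScale [Finite n] [Finite m]
    (h : (crossScale A B D 1).PosSemidef) :
    AntitoneOn (fun t => principalMinor (crossScale A B D t) J) (Set.Icc 0 1) := by
  cases nonempty_fintype n
  cases nonempty_fintype m
  simp only [principalMinor_crossScale]
  refine antitoneOn_det_crossScale ?_
  convert h.submatrix (Sum.map (↑) (↑) : {i // Sum.inl i ∈ J} ⊕ {j // Sum.inr j ∈ J} → n ⊕ m)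
  ext (i | i) (j | j) <;> rfl

lemma differentiable_principalMinor_crossScale [Finite n] [Finite m] :
    Differentiable ℝ (fun t => principalMinor (crossScale A B D t) J) := by
  cases nonempty_fintype n
  cases nonempty_fintype m
  simp only [principalMinor_crossScale]
  exact differentiable_det_crossScale

end PrincipalMinors

section LaplaceTransform

lemma integral_exp_neg_mul_sq_gaussianReal {v : ℝ} (hv : 0 ≤ v) :
    ∫ x, Real.exp (-(v * x ^ 2) / 2) ∂(gaussianReal 0 1) = (√(1 + v))⁻¹ := by
  have hdensity (x : ℝ) : gaussianPDFReal 0 1 x • Real.exp (-(v * x ^ 2) / 2) =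
      (√(2 * Real.pi))⁻¹ * Real.exp (-((1 + v) / 2) * x ^ 2) := by
    simp only [gaussianPDFReal, smul_eq_mul, NNReal.coe_one, mul_one, sub_zero]
    rw [mul_assoc, ← Real.exp_add]
    ring_nf
  rw [integral_gaussianReal_eq_integral_smul one_ne_zero]
  simp_rw [hdensity]
  rw [integral_const_mul, integral_gaussian,
    show Real.pi / ((1 + v) / 2) = (2 * Real.pi) / (1 + v) by field_simp,
    Real.sqrt_div (by positivity)]
  field

variable [Fintype n] [DecidableEq n]

lemma dotProduct_mulVec_sum_eigenvectorBasis {M : Matrix n n ℝ} (hM : M.IsHermitian) (x : n → ℝ) :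
    (∑ i, x i • hM.eigenvectorBasis i).ofLp ⬝ᵥ M *ᵥ (∑ i, x i • hM.eigenvectorBasis i).ofLp =
      ∑ i, hM.eigenvalues i * x i ^ 2 := by
  have heigen (i : n) : toEuclideanCLM (𝕜 := ℝ) M (hM.eigenvectorBasis i) =
      hM.eigenvalues i • hM.eigenvectorBasis i :=
    (WithLp.ofLp_injective 2) (hM.mulVec_eigenvectorBasis i)
  rw [← inner_toEuclideanCLM, map_sum]
  simp only [map_smul, heigen, smul_smul]
  rw [hM.eigenvectorBasis.orthonormal.inner_sum]
  exact Finset.sum_congr rfl fun i _ => by simp only [conj_trivial]; ring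

lemma integral_exp_neg_quadratic_stdGaussian {M : Matrix n n ℝ} (hM : M.PosSemidef) :
    ∫ x, Real.exp (-(x.ofLp ⬝ᵥ M *ᵥ x.ofLp) / 2) ∂(stdGaussian (EuclideanSpace ℝ n)) =
      (√(1 + M).det)⁻¹ := by
  have hprod (y : n → ℝ) : Real.exp (-((∑ i, y i • hM.1.eigenvectorBasis i).ofLp ⬝ᵥ
      M *ᵥ (∑ i, y i • hM.1.eigenvectorBasis i).ofLp) / 2) =
        ∏ i, Real.exp (-(hM.1.eigenvalues i * y i ^ 2) / 2) := by
    rw [dotProduct_mulVec_sum_eigenvectorBasis, ← Real.exp_sum, ← Finset.sum_div,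
      Finset.sum_neg_distrib]
  have hdet : (1 + M).det = ∏ i, (1 + hM.1.eigenvalues i) :=
    det_one_add_eq_prod_eigenvalues hM.1
  rw [stdGaussian_eq_map_pi_orthonormalBasis hM.1.eigenvectorBasis,
    integral_map (Measurable.aemeasurable (by fun_prop))
      (by simp only [dotProduct, mulVec]; fun_prop)]
  simp_rw [hprod]
  rw [integral_fintype_prod_eq_prod fun i (y : ℝ) => Real.exp (-(hM.1.eigenvalues i * y ^ 2) / 2),
    hdet, Real.sqrt_prod _ fun i _ => add_nonneg zero_le_one (hM.eigenvalues_nonneg i),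
    ← Finset.prod_inv_distrib]
  exact Finset.prod_congr rfl fun i _ =>
    integral_exp_neg_mul_sq_gaussianReal (hM.eigenvalues_nonneg i)

lemma integral_exp_neg_quadratic_multivariateGaussian {L C : Matrix n n ℝ} (hL : L.PosSemidef)
    (hC : C.PosSemidef) :
    ∫ x, Real.exp (-(x.ofLp ⬝ᵥ L *ᵥ x.ofLp) / 2) ∂(multivariateGaussian 0 C) =
      (√(1 + L * C).det)⁻¹ := by
  rw [multivariateGaussian,
    integral_map (by fun_prop) (by simp only [dotProduct, mulVec]; fun_prop)]
  set T := CFC.sqrt C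
  have hTT : T * T = C := CFC.sqrt_mul_sqrt_self _ hC.nonneg
  have hTstar : Tᴴ = T := (CFC.sqrt_nonneg C).isSelfAdjoint
  have hquad (x : EuclideanSpace ℝ n) :
      (0 + toEuclideanCLM (𝕜 := ℝ) T x).ofLp ⬝ᵥ L *ᵥ (0 + toEuclideanCLM (𝕜 := ℝ) T x).ofLp =
        x.ofLp ⬝ᵥ (Tᴴ * L * T) *ᵥ x.ofLp := by
    rw [zero_add, ofLp_toEuclideanCLM, ← mulVec_mulVec, ← mulVec_mulVec,
      conjTranspose_eq_transpose_of_trivial, dotProduct_mulVec x.ofLp, vecMul_transpose]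
  simp_rw [hquad]
  rw [integral_exp_neg_quadratic_stdGaussian (hL.conjTranspose_mul_mul_same T), hTstar, mul_assoc,
    det_one_add_mul_comm, mul_assoc, hTT]

lemma integral_exp_neg_sum_sq_multivariateGaussian {C : Matrix n n ℝ} (hC : C.PosSemidef)
    {l : n → ℝ} (hl : 0 ≤ l) :
    ∫ x, Real.exp (-(∑ i, l i * x i ^ 2) / 2) ∂(multivariateGaussian 0 C) =
      (√(1 + diagonal l * C).det)⁻¹ := by
  have hquad (x : EuclideanSpace ℝ n) :
      ∑ i, l i * x i ^ 2 = x.ofLp ⬝ᵥ diagonal l *ᵥ x.ofLp :=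
    Finset.sum_congr rfl fun i _ => by rw [mulVec_diagonal]; ring
  simp_rw [hquad]
  exact integral_exp_neg_quadratic_multivariateGaussian (PosSemidef.diagonal hl) hC

lemma integral_exp_neg_sum_sq_pi_multivariateGaussian {C : Matrix n n ℝ} (hC : C.PosSemidef)
    {l : n → ℝ} (hl : 0 ≤ l) (r : ℕ) :
    ∫ y : Fin r → EuclideanSpace ℝ n, Real.exp (-(∑ i, l i * ∑ k, y k i ^ 2) / 2)
      ∂(Measure.pi fun _ => multivariateGaussian 0 C) = (√(1 + diagonal l * C).det)⁻¹ ^ r := by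
  have hprod (y : Fin r → EuclideanSpace ℝ n) :
      Real.exp (-(∑ i, l i * ∑ k, y k i ^ 2) / 2) =
        ∏ k, Real.exp (-(∑ i, l i * y k i ^ 2) / 2) := by
    simp_rw [Finset.mul_sum]
    rw [← Real.exp_sum, ← Finset.sum_div, Finset.sum_neg_distrib, Finset.sum_comm]
  simp_rw [hprod]
  rw [integral_fintype_prod_eq_pow (ι := Fin r)
      (fun x : EuclideanSpace ℝ n => Real.exp (-(∑ i, l i * x i ^ 2) / 2)),
    integral_exp_neg_sum_sq_multivariateGaussian hC hl, Fintype.card_fin]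

end LaplaceTransform

section Monotonicity

lemma hasDerivAt_inv_sqrt {f : ℝ → ℝ} {f' t : ℝ} (hf : HasDerivAt f f' t) (hpos : 0 < f t) :
    HasDerivAt (fun s => (√(f s))⁻¹) (-(1 / 2) * f' * (√(f t))⁻¹ ^ 3) t := by
  have hsqrt : 0 < √(f t) := Real.sqrt_pos.mpr hpos
  refine ((hf.sqrt hpos.ne').fun_inv hsqrt.ne').congr_deriv ?_
  field

lemma integrable_exp_neg_sum_mul {Ω ι : Type*} [MeasurableSpace Ω] [Fintype ι] (P : Measure Ω)
    [IsFiniteMeasure P] {V : ι → Ω → ℝ} (hV : ∀ i, Measurable (V i)) (hV0 : ∀ i ω, 0 ≤ V i ω)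
    {l : ι → ℝ} (hl : 0 ≤ l) :
    Integrable (fun ω => Real.exp (-(∑ i, l i * V i ω) / 2)) P := by
  refine Integrable.of_bound (by fun_prop) 1 (Eventually.of_forall fun ω => ?_)
  have hsum : 0 ≤ ∑ i, l i * V i ω := Finset.sum_nonneg fun i _ => mul_nonneg (hl i) (hV0 i ω)
  rw [Real.norm_of_nonneg (Real.exp_pos _).le, Real.exp_le_one_iff]
  linarith

variable {κ : Type*} [Fintype n] [DecidableEq n] [Fintype m] [DecidableEq m]

lemma sum_mul_inv_sqrt_det_pow_nonneg {C : Matrix n n ℝ} (hC : C.PosSemidef) (T : Finset κ)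
    {c : κ → ℝ} {l : κ → n → ℝ} (hl : ∀ k, 0 ≤ l k)
    (hsum : ∀ v : n → ℝ, 0 ≤ v → 0 ≤ ∑ k ∈ T, c k * Real.exp (-(∑ i, l k i * v i) / 2)) (r : ℕ) :
    0 ≤ ∑ k ∈ T, c k * (√(1 + diagonal (l k) * C).det)⁻¹ ^ r := by
  have hnonneg (i : n) (y : Fin r → EuclideanSpace ℝ n) : 0 ≤ ∑ j, y j i ^ 2 :=
    Finset.sum_nonneg fun j _ => sq_nonneg _
  simp_rw [← integral_exp_neg_sum_sq_pi_multivariateGaussian hC (hl _) r, ← integral_const_mul]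
  rw [← integral_finsetSum _ fun k _ =>
    (integrable_exp_neg_sum_mul _ (by fun_prop) hnonneg (hl k)).const_mul _]
  exact integral_nonneg fun y => hsum _ fun i => hnonneg i y

variable {A : Matrix n n ℝ} {B : Matrix n m ℝ} {D : Matrix m m ℝ}

lemma hasDerivAt_inv_sqrt_det_crossScale (h : (crossScale A B D 1).PosSemidef)
    {l : n ⊕ m → ℝ} (hl : 0 ≤ l) {t : ℝ} (ht : t ∈ Set.Icc (0 : ℝ) 1) :
    HasDerivAt (fun s => (√(1 + diagonal l * crossScale A B D s).det)⁻¹)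
      (∑ J : Finset (n ⊕ m), -(1 / 2) * deriv (fun s => principalMinor (crossScale A B D s) J) t *
        ((∏ i ∈ J, l i) * (√(1 + diagonal l * crossScale A B D t).det)⁻¹ ^ 3)) t := by
  have hdet : HasDerivAt (fun s => (1 + diagonal l * crossScale A B D s).det)
      (∑ J : Finset (n ⊕ m),
        (∏ i ∈ J, l i) * deriv (fun s => principalMinor (crossScale A B D s) J) t) t := by
    simp only [det_one_add_diagonal_mul]
    exact HasDerivAt.fun_sum fun J _ =>
      ((differentiable_principalMinor_crossScale J) t).hasDerivAt.const_mul _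
  have hpos : 0 < (1 + diagonal l * crossScale A B D t).det :=
    zero_lt_one.trans_le (one_le_det_one_add_mul (.diagonal hl) (posSemidef_crossScale h ht))
  refine (hasDerivAt_inv_sqrt hdet hpos).congr_deriv ?_
  rw [Finset.mul_sum, Finset.sum_mul]
  exact Finset.sum_congr rfl fun J _ => by ring

theorem monotoneOn_sum_mul_inv_sqrt_det_crossScale (h : (crossScale A B D 1).PosSemidef)
    (T : Finset κ) {c : κ → ℝ} {l : κ → n ⊕ m → ℝ} (hl : ∀ k, 0 ≤ l k)
    (hsum : ∀ (J : Finset (n ⊕ m)) (v : n ⊕ m → ℝ), 0 ≤ v →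
      0 ≤ ∑ k ∈ T, c k * (∏ i ∈ J, l k i) * Real.exp (-(∑ i, l k i * v i) / 2)) :
    MonotoneOn (fun t => ∑ k ∈ T, c k * (√(1 + diagonal (l k) * crossScale A B D t).det)⁻¹)
      (Set.Icc 0 1) := by
  have hderiv (t : ℝ) (ht : t ∈ Set.Icc (0 : ℝ) 1) : HasDerivAt
      (fun s => ∑ k ∈ T, c k * (√(1 + diagonal (l k) * crossScale A B D s).det)⁻¹)
      (∑ J, -(1 / 2) * deriv (fun s => principalMinor (crossScale A B D s) J) t * ∑ k ∈ T,
        c k * (∏ i ∈ J, l k i) * (√(1 + diagonal (l k) * crossScale A B D t).det)⁻¹ ^ 3) t := by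
    refine (HasDerivAt.fun_sum fun k _ =>
      (hasDerivAt_inv_sqrt_det_crossScale h (hl k) ht).const_mul (c k)).congr_deriv ?_
    simp only [Finset.mul_sum]
    rw [Finset.sum_comm]
    exact Finset.sum_congr rfl fun J _ => Finset.sum_congr rfl fun k _ => by ring
  refine monotoneOn_of_deriv_nonneg (convex_Icc 0 1)
    (fun t ht => (hderiv t ht).continuousAt.continuousWithinAt)
    (fun t ht => (hderiv t (interior_subset ht)).differentiableAt.differentiableWithinAt)
    fun t ht => ?_
  have htIcc : t ∈ Set.Icc (0 : ℝ) 1 := interior_subset ht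
  have hminor (J : Finset (n ⊕ m)) :
      deriv (fun s => principalMinor (crossScale A B D s) J) t ≤ 0 := by
    rw [← derivWithin_of_mem_nhds (mem_interior_iff_mem_nhds.mp ht)]
    exact (antitoneOn_principalMinor_crossScale J h).derivWithin_nonpos
  rw [(hderiv t htIcc).deriv]
  exact Finset.sum_nonneg fun J _ => mul_nonneg (by linarith [hminor J])
    (sum_mul_inv_sqrt_det_pow_nonneg (posSemidef_crossScale h htIcc) T hl (hsum J) 3)

lemma monotoneOn_integral_sum_exp_crossScale (h : (crossScale A B D 1).PosSemidef)
    (T : Finset κ) {c : κ → ℝ} {l : κ → n ⊕ m → ℝ} (hl : ∀ k, 0 ≤ l k)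
    (hsum : ∀ (J : Finset (n ⊕ m)) (v : n ⊕ m → ℝ), 0 ≤ v →
      0 ≤ ∑ k ∈ T, c k * (∏ i ∈ J, l k i) * Real.exp (-(∑ i, l k i * v i) / 2)) :
    MonotoneOn (fun t => ∫ x, ∑ k ∈ T, c k * Real.exp (-(∑ i, l k i * x i ^ 2) / 2)
      ∂(multivariateGaussian 0 (crossScale A B D t))) (Set.Icc 0 1) := by
  refine (monotoneOn_sum_mul_inv_sqrt_det_crossScale h T hl hsum).congr fun t ht => ?_
  simp_rw [← integral_exp_neg_sum_sq_multivariateGaussian (posSemidef_crossScale h ht) (hl _),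
    ← integral_const_mul]
  refine (integral_finsetSum _ fun k _ => Integrable.const_mul ?_ _).symm
  exact integrable_exp_neg_sum_mul (multivariateGaussian 0 (crossScale A B D t))
    (V := fun i x => x.ofLp i ^ 2) (fun i => by fun_prop) (fun _ _ => sq_nonneg _) (hl k)

lemma prod_sum_mul_exp_pow {ι : Type*} [Fintype ι] [DecidableEq ι] (S : ι → Finset ℕ)
    (a : ι → ℕ → ℝ) (ρ v : ι → ℝ) :
    ∏ i, ∑ e ∈ S i, a i e * Real.exp (-(ρ i * v i) / 2) ^ e =
      ∑ k ∈ Fintype.piFinset S,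
        (∏ i, a i (k i)) * Real.exp (-(∑ i, ρ i * k i * v i) / 2) := by
  rw [Finset.prod_univ_sum]
  refine Finset.sum_congr rfl fun k _ => ?_
  simp_rw [Finset.prod_mul_distrib, ← Real.exp_nat_mul]
  rw [← Real.exp_sum, ← Finset.sum_neg_distrib, Finset.sum_div]
  congr 2
  exact Finset.sum_congr rfl fun i _ => by ring

lemma mul_eval_derivative_eq_sum (p : Polynomial ℝ) (u : ℝ) :
    u * p.derivative.eval u = ∑ e ∈ p.support, p.coeff e * e * u ^ e := by
  rw [Polynomial.derivative_eval, Polynomial.sum, Finset.mul_sum]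
  refine Finset.sum_congr rfl fun e _ => ?_
  rcases e with _ | e
  · simp
  · rw [Nat.add_sub_cancel]; ring

lemma prod_ite_eval_exp_eq_sum {ι : Type*} [Fintype ι] [DecidableEq ι] (p : ι → Polynomial ℝ)
    (J : Finset ι) (ρ v : ι → ℝ) :
    ∏ i, (if i ∈ J then ρ i * (Real.exp (-(ρ i * v i) / 2) *
        (p i).derivative.eval (Real.exp (-(ρ i * v i) / 2)))
      else (p i).eval (Real.exp (-(ρ i * v i) / 2))) =
    ∑ k ∈ Fintype.piFinset fun i => (p i).support, (∏ i, (p i).coeff (k i)) *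
      (∏ i ∈ J, ρ i * k i) * Real.exp (-(∑ i, ρ i * k i * v i) / 2) := by
  have hcoeff (k : ι → ℕ) : (∏ i, (p i).coeff (k i)) * (∏ i ∈ J, ρ i * k i) =
      ∏ i, (p i).coeff (k i) * (if i ∈ J then ρ i * k i else 1) := by
    rw [Finset.prod_mul_distrib (s := Finset.univ), Finset.prod_ite_mem, Finset.univ_inter]
  simp_rw [hcoeff]
  rw [← prod_sum_mul_exp_pow (fun i => (p i).support)
    (fun i e => (p i).coeff e * (if i ∈ J then ρ i * e else 1))]
  refine Finset.prod_congr rfl fun i _ => ?_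
  split_ifs
  · rw [mul_eval_derivative_eq_sum, Finset.mul_sum]
    exact Finset.sum_congr rfl fun e _ => by ring
  · simp only [Polynomial.eval_eq_sum, Polynomial.sum, mul_one]

theorem monotoneOn_integral_prod_eval_exp_crossScale (h : (crossScale A B D 1).PosSemidef)
    {p : n ⊕ m → Polynomial ℝ} {ρ : n ⊕ m → ℝ} (hρ : 0 ≤ ρ)
    (hp : ∀ i, ∀ u ∈ Set.Icc (0 : ℝ) 1, 0 ≤ (p i).eval u)
    (hp' : ∀ i, ∀ u ∈ Set.Icc (0 : ℝ) 1, 0 ≤ (p i).derivative.eval u) :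
    MonotoneOn (fun t => ∫ x, ∏ i, (p i).eval (Real.exp (-(ρ i * x i ^ 2) / 2))
      ∂(multivariateGaussian 0 (crossScale A B D t))) (Set.Icc 0 1) := by
  have hexpand (v : n ⊕ m → ℝ) : ∏ i, (p i).eval (Real.exp (-(ρ i * v i) / 2)) =
      ∑ k ∈ Fintype.piFinset fun i => (p i).support,
        (∏ i, (p i).coeff (k i)) * Real.exp (-(∑ i, ρ i * k i * v i) / 2) := by
    simpa using prod_ite_eval_exp_eq_sum p ∅ ρ v
  simp_rw [hexpand]
  refine monotoneOn_integral_sum_exp_crossScale h _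
    (c := fun k : n ⊕ m → ℕ => ∏ i, (p i).coeff (k i)) (l := fun k i => ρ i * k i)
    (fun k i => mul_nonneg (hρ i) (Nat.cast_nonneg _)) fun J v hv => ?_
  rw [← prod_ite_eval_exp_eq_sum]
  refine Finset.prod_nonneg fun i _ => ?_
  have hexp : Real.exp (-(ρ i * v i) / 2) ∈ Set.Icc (0 : ℝ) 1 :=
    ⟨(Real.exp_pos _).le, Real.exp_le_one_iff.mpr (by linarith [mul_nonneg (hρ i) (hv i)])⟩
  split_ifs
  · exact mul_nonneg (hρ i) (mul_nonneg hexp.1 (hp' i _ hexp))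
  · exact hp i _ hexp

end Monotonicity

section StepPolynomials

/-- Polynomials, for `M ≥ 1` increasing from `0` to `1` on `[0, 1]`, that converge pointwise there
to the indicator of `[1/2, 1]`; the exponent `M * 2 ^ M` places the jump at `1/2`. -/
noncomputable def stepPoly (M : ℕ) : Polynomial ℝ := 1 - (1 - Polynomial.X ^ M) ^ (M * 2 ^ M)

variable {u : ℝ}

lemma eval_stepPoly (M : ℕ) (u : ℝ) : (stepPoly M).eval u = 1 - (1 - u ^ M) ^ (M * 2 ^ M) := by
  simp [stepPoly]

lemma eval_stepPoly_mem_Icc (M : ℕ) (hu : u ∈ Set.Icc (0 : ℝ) 1) :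
    (stepPoly M).eval u ∈ Set.Icc (0 : ℝ) 1 := by
  have hpow : u ^ M ∈ Set.Icc (0 : ℝ) 1 := ⟨pow_nonneg hu.1 M, pow_le_one₀ hu.1 hu.2⟩
  have hbase : 0 ≤ 1 - u ^ M := sub_nonneg.mpr hpow.2
  rw [eval_stepPoly]
  exact ⟨sub_nonneg.mpr (pow_le_one₀ hbase (sub_le_self _ hpow.1)),
    sub_le_self _ (pow_nonneg hbase _)⟩

lemma eval_derivative_stepPoly_nonneg (M : ℕ) (hu : u ∈ Set.Icc (0 : ℝ) 1) :
    0 ≤ (stepPoly M).derivative.eval u := by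
  have hu0 : 0 ≤ u := hu.1
  have hbase : 0 ≤ 1 - u ^ M := sub_nonneg.mpr (pow_le_one₀ hu.1 hu.2)
  simp only [stepPoly, Polynomial.derivative_sub, Polynomial.derivative_one,
    Polynomial.derivative_pow, Polynomial.derivative_X, Polynomial.eval_sub, Polynomial.eval_mul,
    Polynomial.eval_pow, Polynomial.eval_one, Polynomial.eval_X,
    Polynomial.eval_C, zero_sub, mul_neg, neg_neg, mul_one]
  positivity

lemma one_sub_exp_neg_le_eval_stepPoly (M : ℕ) (hu : u ∈ Set.Icc (1 / 2 : ℝ) 1) :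
    1 - Real.exp (-M) ≤ (stepPoly M).eval u := by
  have hu0 : 0 ≤ u := by linarith [hu.1]
  rw [eval_stepPoly]
  refine sub_le_sub_left ?_ 1
  calc (1 - u ^ M) ^ (M * 2 ^ M)
      ≤ Real.exp (-u ^ M) ^ (M * 2 ^ M) :=
        pow_le_pow_left₀ (sub_nonneg.mpr (pow_le_one₀ hu0 hu.2)) (Real.one_sub_le_exp_neg _) _
    _ = Real.exp (-(M * (2 * u) ^ M)) := by
        rw [← Real.exp_nat_mul, mul_pow]
        push_cast
        ring_nf
    _ ≤ Real.exp (-M) := by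
        have hone : 1 ≤ (2 * u) ^ M := one_le_pow₀ (by linarith [hu.1])
        exact Real.exp_le_exp.mpr (neg_le_neg (le_mul_of_one_le_right M.cast_nonneg hone))

lemma eval_stepPoly_le (M : ℕ) (hu : u ∈ Set.Icc (0 : ℝ) 1) :
    (stepPoly M).eval u ≤ M * (2 * u) ^ M := by
  have hbernoulli := one_add_mul_le_pow (a := -u ^ M)
    (by linarith [pow_le_one₀ (n := M) hu.1 hu.2]) (M * 2 ^ M)
  push_cast at hbernoulli
  rw [eval_stepPoly, mul_pow, sub_eq_add_neg 1 (u ^ M)]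
  linarith

lemma tendsto_eval_stepPoly (hu : u ∈ Set.Icc (0 : ℝ) 1) :
    Tendsto (fun M => (stepPoly M).eval u) atTop (𝓝 (if 1 / 2 ≤ u then 1 else 0)) := by
  split_ifs with h
  · have hexp : Tendsto (fun M : ℕ => 1 - Real.exp (-M)) atTop (𝓝 1) := by
      simpa using
        (Real.tendsto_exp_neg_atTop_nhds_zero.comp tendsto_natCast_atTop_atTop).const_sub (1 : ℝ)
    exact tendsto_of_tendsto_of_tendsto_of_le_of_le hexp tendsto_const_nhds
      (fun M => one_sub_exp_neg_le_eval_stepPoly M ⟨h, hu.2⟩)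
      (fun M => (eval_stepPoly_mem_Icc M hu).2)
  · exact tendsto_of_tendsto_of_tendsto_of_le_of_le tendsto_const_nhds
      (tendsto_self_mul_const_pow_of_lt_one (by linarith [hu.1]) (by linarith))
      (fun M => (eval_stepPoly_mem_Icc M hu).1) (fun M => eval_stepPoly_le M hu)

lemma tendsto_integral_prod_eval_stepPoly {Ω ι : Type*} [MeasurableSpace Ω] [Fintype ι]
    (P : Measure Ω) [IsFiniteMeasure P] {U : ι → Ω → ℝ} (hU : ∀ i, Measurable (U i))
    (hmem : ∀ i ω, U i ω ∈ Set.Icc (0 : ℝ) 1) :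
    Tendsto (fun M => ∫ ω, ∏ i, (stepPoly M).eval (U i ω) ∂P) atTop
      (𝓝 (P.real {ω | ∀ i, 1 / 2 ≤ U i ω})) := by
  have hmeas : MeasurableSet {ω | ∀ i, 1 / 2 ≤ U i ω} := by measurability
  rw [← integral_indicator_one hmeas]
  refine tendsto_integral_of_dominated_convergence (fun _ => 1) (fun M => ?_)
    (integrable_const _) (fun M => Eventually.of_forall fun ω => ?_)
    (Eventually.of_forall fun ω => ?_)
  · simp only [eval_stepPoly]
    fun_prop
  · have hstep (i : ι) := eval_stepPoly_mem_Icc M (hmem i ω)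
    rw [Real.norm_of_nonneg (Finset.prod_nonneg fun i _ => (hstep i).1)]
    exact Finset.prod_le_one (fun i _ => (hstep i).1) fun i _ => (hstep i).2
  · have hlim := tendsto_finsetProd Finset.univ fun i _ => tendsto_eval_stepPoly (hmem i ω)
    simpa [Finset.prod_ite_zero, Set.indicator_apply] using hlim

end StepPolynomials

section Slabs

lemma half_le_exp_neg_log_two_mul_sq {y : ℝ} :
    1 / 2 ≤ Real.exp (-(2 * Real.log 2 * y ^ 2) / 2) ↔ |y| ≤ 1 := by
  have hlog : 0 < Real.log 2 := Real.log_pos one_lt_two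
  rw [← Real.log_le_iff_le_exp one_half_pos, one_div, Real.log_inv, ← sq_le_one_iff_abs_le_one]
  constructor <;> intro h <;> nlinarith

theorem monotoneOn_measure_slab_crossScale [Fintype n] [DecidableEq n] [Fintype m] [DecidableEq m]
    {A : Matrix n n ℝ} {B : Matrix n m ℝ} {D : Matrix m m ℝ}
    (h : (crossScale A B D 1).PosSemidef) :
    MonotoneOn (fun t => (multivariateGaussian 0 (crossScale A B D t)).real {x | ∀ i, |x i| ≤ 1})
      (Set.Icc 0 1) := by
  intro s hs t ht hst
  have hlog : 0 ≤ 2 * Real.log 2 := mul_nonneg zero_le_two (Real.log_nonneg one_le_two)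
  have hmem (i : n ⊕ m) (x : EuclideanSpace ℝ (n ⊕ m)) :
      Real.exp (-(2 * Real.log 2 * x i ^ 2) / 2) ∈ Set.Icc (0 : ℝ) 1 :=
    ⟨(Real.exp_pos _).le,
      Real.exp_le_one_iff.mpr (by linarith [mul_nonneg hlog (sq_nonneg (x i))])⟩
  have hlim (r : ℝ) := tendsto_integral_prod_eval_stepPoly
    (multivariateGaussian 0 (crossScale A B D r)) (fun i => by fun_prop) hmem
  simp only [half_le_exp_neg_log_two_mul_sq] at hlim
  exact le_of_tendsto_of_tendsto' (hlim s) (hlim t) fun M =>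
    monotoneOn_integral_prod_eval_exp_crossScale h (p := fun _ => stepPoly M) (fun _ => hlog)
      (fun _ u hu => (eval_stepPoly_mem_Icc M hu).1)
      (fun _ u hu => eval_derivative_stepPoly_nonneg M hu) hs ht hst

end Slabs

section GaussianVectors

variable {ι Ω : Type*} [MeasurableSpace Ω] {P : Measure Ω} {X : ι → Ω → ℝ}

lemma posSemidef_covariance [Finite ι] [IsFiniteMeasure P] (hX : ∀ i, MemLp (X i) 2 P) :
    (Matrix.of fun i j => cov[X i, X j; P]).PosSemidef := by
  cases nonempty_fintype ι
  refine .of_dotProduct_mulVec_nonneg (Matrix.ext fun i j => covariance_comm _ _) fun x => ?_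
  have h := covarianceBilin_self_nonneg (μ := P.map fun ω => WithLp.toLp 2 (X · ω))
    (WithLp.toLp 2 x)
  rw [covarianceBilin_apply_pi hX] at h
  simpa [dotProduct, mulVec, Finset.mul_sum, mul_assoc, mul_comm, mul_left_comm] using h

lemma hasGaussianLaw_toLp_apply [Finite ι] {E : Type*} [TopologicalSpace E] [AddCommMonoid E]
    [Module ℝ E] [MeasurableSpace E] [OpensMeasurableSpace E] {μ : Measure E} [IsGaussian μ]
    (f : ι → E →L[ℝ] ℝ) : HasGaussianLaw (fun x => WithLp.toLp 2 (f · x)) μ where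
  isGaussian_map := isGaussian_map_of_measurable
    (L := (EuclideanSpace.equiv ι ℝ).symm.toContinuousLinearMap.comp (.pi f)) (by fun_prop)

variable [Fintype ι] [DecidableEq ι] {S : Matrix ι ι ℝ}

lemma map_toLp_eq_multivariateGaussian (hX : HasGaussianLaw (fun ω => WithLp.toLp 2 (X · ω)) P)
    (hmean : ∀ i, P[X i] = 0) (hS : S.PosSemidef) (hcov : ∀ i j, cov[X i, X j; P] = S i j) :
    P.map (fun ω => WithLp.toLp 2 (X · ω)) = multivariateGaussian 0 S := by
  have := hX.isGaussian_map
  have := hX.isProbabilityMeasure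
  have hmem (i : ι) : MemLp (X i) 2 P := hX.memLp_two.eval_piLp i
  apply IsGaussian.ext
  · rw [integral_id_multivariateGaussian', integral_map hX.aemeasurable (by fun_prop)]
    ext i
    exact (eval_integral_piLp (fun i => (hmem i).integrable one_le_two) i).trans (hmean i)
  · rw [← ContinuousLinearMap.toBilinForm_inj]
    refine LinearMap.BilinForm.ext_basis (EuclideanSpace.basisFun ι ℝ).toBasis fun i j => ?_
    rw [ContinuousLinearMap.toBilinForm_apply, ContinuousLinearMap.toBilinForm_apply,
      OrthonormalBasis.coe_toBasis, covarianceBilin_apply_basisFun hmem, hcov,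
      covarianceBilin_multivariateGaussian hS]
    simp

end GaussianVectors

section Decoupling

lemma exists_eq_crossScale_one {S : Matrix (n ⊕ m) (n ⊕ m) ℝ} (hS : S.IsHermitian) :
    ∃ A B D, S = crossScale A B D 1 := by
  refine ⟨S.toBlocks₁₁, S.toBlocks₁₂, S.toBlocks₂₂, ?_⟩
  rw [crossScale, one_smul]
  conv_lhs => rw [← fromBlocks_toBlocks S]
  congr 1
  ext j i
  exact (hS.apply (Sum.inr j) (Sum.inl i)).symm

variable [Fintype n] [DecidableEq n] [Fintype m] [DecidableEq m]

lemma measurePreserving_prod_multivariateGaussian_crossScale {A : Matrix n n ℝ} {B : Matrix n m ℝ}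
    {D : Matrix m m ℝ} (h : (crossScale A B D 1).PosSemidef) :
    MeasurePreserving
      (fun z => WithLp.toLp 2 (Sum.elim (fun i => z.1 (Sum.inl i)) fun j => z.2 (Sum.inr j)))
      ((multivariateGaussian 0 (crossScale A B D 1)).prod
        (multivariateGaussian 0 (crossScale A B D 1)))
      (multivariateGaussian 0 (crossScale A B D 0)) := by
  set ν := multivariateGaussian 0 (crossScale A B D 1)
  let coord (k : n ⊕ m) : EuclideanSpace ℝ (n ⊕ m) →L[ℝ] ℝ := EuclideanSpace.proj k
  have hmem (k : n ⊕ m) : MemLp (coord k) 2 ν := IsGaussian.memLp_two_id.eval_piLp k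
  have hmean (k : n ⊕ m) : ν[coord k] = 0 := by
    rw [(coord k).integral_comp_comm IsGaussian.integrable_fun_id,
      integral_id_multivariateGaussian, map_zero]
  have hcov (k l : n ⊕ m) : cov[coord k, coord l; ν] = crossScale A B D 1 k l :=
    covariance_eval_multivariateGaussian h k l
  let f : n ⊕ m → EuclideanSpace ℝ (n ⊕ m) × EuclideanSpace ℝ (n ⊕ m) →L[ℝ] ℝ :=
    Sum.elim (fun i => coord (Sum.inl i) ∘L .fst ℝ _ _) fun j => coord (Sum.inr j) ∘L .snd ℝ _ _
  have hf (z) : Sum.elim (fun i => z.1 (Sum.inl i)) (fun j => z.2 (Sum.inr j)) = (f · z) := by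
    ext (i | j) <;> rfl
  simp only [hf]
  refine ⟨by fun_prop, map_toLp_eq_multivariateGaussian (hasGaussianLaw_toLp_apply f) ?_
    (posSemidef_crossScale h ⟨le_rfl, zero_le_one⟩) ?_⟩
  · rintro (i | j)
    · exact (integral_fun_fst (coord (Sum.inl i))).trans (by rw [hmean, smul_zero])
    · exact (integral_fun_snd (coord (Sum.inr j))).trans (by rw [hmean, smul_zero])
  · rintro (i | i) (j | j)
    · exact (measurePreserving_fst.hasLaw.covariance_fun_comp (by fun_prop) (by fun_prop)).trans
        ((hcov _ _).trans (by simp [crossScale]))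
    · exact (covariance_fst_snd_prod (hmem _) (hmem _)).trans (by simp [crossScale])
    · exact (covariance_comm _ _).trans
        ((covariance_fst_snd_prod (hmem _) (hmem _)).trans (by simp [crossScale]))
    · exact (measurePreserving_snd.hasLaw.covariance_fun_comp (by fun_prop) (by fun_prop)).trans
        ((hcov _ _).trans (by simp [crossScale]))

theorem measure_slab_mul_le_multivariateGaussian {S : Matrix (n ⊕ m) (n ⊕ m) ℝ}
    (hS : S.PosSemidef) :
    (multivariateGaussian 0 S).real {x | ∀ i, |x (Sum.inl i)| ≤ 1} *
        (multivariateGaussian 0 S).real {x | ∀ j, |x (Sum.inr j)| ≤ 1} ≤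
      (multivariateGaussian 0 S).real {x | ∀ k, |x k| ≤ 1} := by
  obtain ⟨A, B, D, rfl⟩ := exists_eq_crossScale_one hS.isHermitian
  have hslab : MeasurableSet {x : EuclideanSpace ℝ (n ⊕ m) | ∀ k, |x k| ≤ 1} := by measurability
  calc _ = (multivariateGaussian 0 (crossScale A B D 0)).real {x | ∀ k, |x k| ≤ 1} := by
        rw [← measureReal_prod_prod,
          ← (measurePreserving_prod_multivariateGaussian_crossScale hS).measureReal_preimage
            hslab.nullMeasurableSet]
        congr 1
        ext z
        simp
    _ ≤ _ := monotoneOn_measure_slab_crossScale hS (by simp) (by simp) zero_le_one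

end Decoupling

section LocallyConvex

variable {E : Type*} [AddCommGroup E] [Module ℝ E] [TopologicalSpace E]

theorem measure_slab_mul_le_measure_inter [Finite n] [Finite m] [MeasurableSpace E]
    [OpensMeasurableSpace E] {μ : Measure E} [IsGaussian μ] (hmean : ∀ f : E →L[ℝ] ℝ, μ[f] = 0)
    (f : n → E →L[ℝ] ℝ) (g : m → E →L[ℝ] ℝ) :
    μ {x | ∀ i, |f i x| ≤ 1} * μ {x | ∀ j, |g j x| ≤ 1} ≤
      μ ({x | ∀ i, |f i x| ≤ 1} ∩ {x | ∀ j, |g j x| ≤ 1}) := by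
  classical
  cases nonempty_fintype n
  cases nonempty_fintype m
  let T (x : E) : EuclideanSpace ℝ (n ⊕ m) := WithLp.toLp 2 (Sum.elim f g · x)
  have hlaw : HasGaussianLaw T μ := hasGaussianLaw_toLp_apply (Sum.elim f g)
  have hS := posSemidef_covariance fun k => hlaw.memLp_two.eval_piLp k
  have hmap := map_toLp_eq_multivariateGaussian hlaw (fun k => hmean _) hS fun _ _ => rfl
  have hT {s : Set (EuclideanSpace ℝ (n ⊕ m))} (hs : MeasurableSet s) :=
    (MeasurePreserving.mk (by fun_prop) hmap).measure_preimage hs.nullMeasurableSet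
  have h := measure_slab_mul_le_multivariateGaussian hS
  simp only [Measure.real, ← ENNReal.toReal_mul] at h
  rw [ENNReal.toReal_le_toReal (by finiteness) (by finiteness), ← hT (by measurability),
    ← hT (by measurability), ← hT (by measurability)] at h
  have hinter : {x | ∀ i, |f i x| ≤ 1} ∩ {x | ∀ j, |g j x| ≤ 1} =
      T ⁻¹' {y | ∀ k, |y k| ≤ 1} := by
    ext x
    simp [T]
  rw [hinter]
  exact h

theorem measure_iInter_slab_mul_le_measure_inter [MeasurableSpace E] [OpensMeasurableSpace E]
    {μ : Measure E} [IsGaussian μ] (hmean : ∀ f : E →L[ℝ] ℝ, μ[f] = 0) (f g : ℕ → E →L[ℝ] ℝ) :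
    μ (⋂ k, {x | |f k x| ≤ 1}) * μ (⋂ k, {x | |g k x| ≤ 1}) ≤
      μ ((⋂ k, {x | |f k x| ≤ 1}) ∩ ⋂ k, {x | |g k x| ≤ 1}) := by
  have hslab (f : ℕ → E →L[ℝ] ℝ) (k : ℕ) : MeasurableSet {x | |f k x| ≤ 1} := by measurability
  have hlim {s : ℕ → Set E} (hs : ∀ k, MeasurableSet (s k)) :
      Tendsto (fun k => μ (⋂ j ≤ k, s j)) atTop (𝓝 (μ (⋂ k, s k))) :=
    tendsto_measure_iInter_le (fun k => (hs k).nullMeasurableSet) ⟨0, by finiteness⟩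
  rw [← Set.iInter_inter_distrib]
  refine le_of_tendsto_of_tendsto'
    (ENNReal.Tendsto.mul (hlim (hslab f)) (.inr (by finiteness)) (hlim (hslab g))
      (.inr (by finiteness)))
    (hlim fun k => (hslab f k).inter (hslab g k)) fun k => ?_
  have h := measure_slab_mul_le_measure_inter hmean (fun i : Set.Iic k => f i)
    fun i : Set.Iic k => g i
  simpa [Set.iInter_inter_distrib, Set.ofPred_forall] using h

variable [IsTopologicalAddGroup E] [ContinuousSMul ℝ E] [LocallyConvexSpace ℝ E] {K : Set E}

theorem iInter_polar_slab_eq (hne : K.Nonempty) (hclosed : IsClosed K) (hconv : Convex ℝ K)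
    (hsymm : K = -K) : ⋂ f : StrongDual.polar ℝ K, {x | |f.1 x| ≤ 1} = K := by
  have hneg {x : E} (hx : x ∈ K) : -x ∈ K := by rwa [hsymm] at hx
  have hzero : (0 : E) ∈ K := by
    obtain ⟨x, hx⟩ := hne
    simpa using hconv.midpoint_mem hx (hneg hx)
  refine Set.Subset.antisymm (fun x hx => ?_) fun x hx => Set.mem_iInter.mpr fun f => f.2 x hx
  by_contra hxK
  obtain ⟨f, u, hfK, hux⟩ := geometric_hahn_banach_closed_point hconv hclosed hxK
  have hu : 0 < u := by simpa using hfK 0 hzero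
  have hpolar : u⁻¹ • f ∈ StrongDual.polar ℝ K := fun y hy => by
    have hy' : |f y| ≤ u := abs_le'.mpr ⟨(hfK y hy).le, by simpa using (hfK _ (hneg hy)).le⟩
    simpa [abs_of_pos hu, inv_mul_le_iff₀ hu] using hy'
  have hfx : |f x| ≤ u := by
    simpa [abs_of_pos hu, inv_mul_le_iff₀ hu] using Set.mem_iInter.mp hx ⟨_, hpolar⟩
  exact (hux.trans_le (le_abs_self _)).not_ge hfx

theorem exists_seq_iInter_slab_eq [HereditarilyLindelofSpace E] (hne : K.Nonempty)
    (hclosed : IsClosed K) (hconv : Convex ℝ K) (hsymm : K = -K) :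
    ∃ f : ℕ → E →L[ℝ] ℝ, ⋂ k, {x | |f k x| ≤ 1} = K := by
  have : Nonempty (StrongDual.polar ℝ K) := (StrongDual.polar_nonempty ℝ K).to_subtype
  obtain ⟨f, hf⟩ := eq_closed_inter_nat
    (fun f : StrongDual.polar ℝ K => {x | |f.1 x| ≤ 1})
    fun f => isClosed_le f.1.continuous.abs continuous_const
  exact ⟨fun k => (f k).1, hf.trans (iInter_polar_slab_eq hne hclosed hconv hsymm)⟩

end LocallyConvex

end GaussianCorrelation

theorem stmt2_general {E : Type*} [AddCommGroup E] [Module ℝ E] [TopologicalSpace E]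
    [IsTopologicalAddGroup E] [ContinuousSMul ℝ E] [LocallyConvexSpace ℝ E]
    [HereditarilyLindelofSpace E] [MeasurableSpace E] [OpensMeasurableSpace E] (μ : Measure E)
    (hGauss : ∀ L : E →L[ℝ] ℝ, ∃ v : NNReal, μ.map L = gaussianReal 0 v)
    (K L : Set E) (hKc : IsClosed K) (hKconv : Convex ℝ K) (hKsym : K = -K)
    (hLc : IsClosed L) (hLconv : Convex ℝ L) (hLsym : L = -L) :
    μ K * μ L ≤ μ (K ∩ L) := by
  have : IsGaussian μ := isGaussian_of_map_eq_gaussianReal fun f => ⟨0, hGauss f⟩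
  have hmean (f : E →L[ℝ] ℝ) : μ[f] = 0 := by
    obtain ⟨v, hv⟩ := hGauss f
    have hid : ∫ y, y ∂(μ.map f) = 0 := hv ▸ integral_id_gaussianReal
    rwa [integral_map (by fun_prop) (by fun_prop)] at hid
  rcases K.eq_empty_or_nonempty with rfl | hK
  · simp
  rcases L.eq_empty_or_nonempty with rfl | hL
  · simp
  obtain ⟨f, rfl⟩ := GaussianCorrelation.exists_seq_iInter_slab_eq hK hKc hKconv hKsym
  obtain ⟨g, rfl⟩ := GaussianCorrelation.exists_seq_iInter_slab_eq hL hLc hLconv hLsym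
  exact GaussianCorrelation.measure_iInter_slab_mul_le_measure_inter hmean f g

/-- the Gaussian correlation inequality on a separable Banach space:
for a centred Gaussian Borel measure `μ` (every continuous linear functional has a
centred Gaussian distribution) and closed, convex, symmetric sets `K, L`,
`μ(K ∩ L) ≥ μ(K) μ(L)`. -/
theorem stmt2 {E : Type*} [NormedAddCommGroup E] [NormedSpace ℝ E] [CompleteSpace E]
    [TopologicalSpace.SeparableSpace E] [MeasurableSpace E] [BorelSpace E]
    (μ : Measure E) [IsProbabilityMeasure μ]
    (hGauss : ∀ L : E →L[ℝ] ℝ, ∃ v : NNReal, μ.map L = gaussianReal 0 v)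
    (K L : Set E) (hKc : IsClosed K) (hKconv : Convex ℝ K) (hKsym : K = -K)
    (hLc : IsClosed L) (hLconv : Convex ℝ L) (hLsym : L = -L) :
    μ K * μ L ≤ μ (K ∩ L) := by
  have := UniformSpace.secondCountable_of_separable E
  exact stmt2_general μ hGauss K L hKc hKconv hKsym hLc hLconv hLsym
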